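/- (Theorem 3, deterministic form: tightness of the SDR for the single-BS power-minimization problem.) Consider the semidefinite program: minimize (∑_{k=1}^K tr(F_k))/P over Hermitian positive-semidefinite matrices F_1, …, F_K ∈ ℂ^{N_t×N_t} and q > 0, subject to (i) C(q) ≤ ε; (ii) η (∑_{j≠k} h_kᴴ F_j h_k + σ²) ≤ h_kᴴ F_k h_k for all k; (iii) q ≤ aᵀ (∑_{k=1}^K F_k) ā. Suppose this problem is feasible and its optimal value is attained, and suppose ā does not lie in the linear span of { h_1, …, h_K }. Then there exists an optimal solution in which every F_k has rank at most one. -/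

import Mathlib

open Matrix ComplexOrder Finset

/-- The CRLB `C(q) = tr((Λ (q D) Λᵀ)⁻¹)`. -/
noncomputable def Cq {N : ℕ} (Λ : Matrix (Fin 2) (Fin N) ℝ)
    (D : Matrix (Fin N) (Fin N) ℝ) (q : ℝ) : ℝ :=
  ((Λ * (q • D) * Λᵀ)⁻¹).trace

/-- Feasibility for the single-BS power-minimization SDR problem (25). -/
def PMinFeas {K Nt N : ℕ} (h : Fin K → Fin Nt → ℂ) (a : Fin Nt → ℂ)
    (Λ : Matrix (Fin 2) (Fin N) ℝ) (D : Matrix (Fin N) (Fin N) ℝ)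
    (σ2 η ε : ℝ)
    (F : Fin K → Matrix (Fin Nt) (Fin Nt) ℂ) (q : ℝ) : Prop :=
  (∀ k, (F k).PosSemidef) ∧ 0 < q ∧
  -- (i) CRLB constraint
  Cq Λ D q ≤ ε ∧
  -- (ii) SINR constraints
  (∀ k, η * ((∑ j ∈ Finset.univ.erase k, (star (h k) ⬝ᵥ (F j).mulVec (h k)).re) + σ2)
      ≤ (star (h k) ⬝ᵥ (F k).mulVec (h k)).re) ∧
  -- (iii) sensing-gain constraint
  q ≤ (a ⬝ᵥ (∑ k, F k).mulVec (star a)).re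


lemma psd_entry_bound {n : ℕ} {F : Matrix (Fin n) (Fin n) ℂ} (hF : F.PosSemidef) (T : ℝ)
    (hT : F.trace.re ≤ T) (i j : Fin n) : ‖F i j‖ ≤ 2 * T := by
  have hd : ∀ k, 0 ≤ (F k k).re := fun k => (Complex.le_def.1 (hF.diag_nonneg (i := k))).1
  have hle : ∀ k, (F k k).re ≤ T := by
    intro k
    refine le_trans ?_ hT
    rw [Matrix.trace, Complex.re_sum]
    exact Finset.single_le_sum (f := fun k => (F.diag k).re) (fun k _ => hd k) (Finset.mem_univ k)
  have hji : F j i = star (F i j) := (hF.1.apply j i).symm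
  have q : ∀ θ : ℂ, 0 ≤ (F i i + θ * F i j + star θ * F j i + star θ * θ * F j j).re := by
    intro θ
    have := hF.dotProduct_mulVec_nonneg (Pi.single i 1 + θ • Pi.single j 1)
    have h2 : star (Pi.single i 1 + θ • Pi.single j 1 : Fin n → ℂ) ⬝ᵥ F *ᵥ (Pi.single i 1 + θ • Pi.single j 1)
      = F i i + θ * F i j + star θ * F j i + star θ * θ * F j j := by
      rw [star_add, star_smul, ← Pi.single_star, ← Pi.single_star]
      simp [Matrix.mulVec_add, Matrix.mulVec_smul, add_dotProduct, dotProduct_add]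
      ring
    rw [h2] at this
    exact (Complex.le_def.1 this).1
  have h1 := q 1
  have h2 := q (-1)
  have h3 := q Complex.I
  have h4 := q (-Complex.I)
  rw [hji] at h1 h2 h3 h4
  simp at h1 h2 h3 h4
  have := Complex.norm_le_abs_re_add_abs_im (F i j)
  have a1 : |(F i j).re| ≤ T := abs_le.2 ⟨by linarith [hle i, hle j], by linarith [hle i, hle j]⟩
  have a2 : |(F i j).im| ≤ T := abs_le.2 ⟨by linarith [hle i, hle j], by linarith [hle i, hle j]⟩
  linarith

lemma psd_sub {n : ℕ} {F : Matrix (Fin n) (Fin n) ℂ} (hF : F.PosSemidef) (z : Fin n → ℂ) :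
    ∃ δ : ℝ, 0 < δ ∧ (F - (δ:ℂ) • vecMulVec (F *ᵥ z) (star (F *ᵥ z))).PosSemidef := by
  obtain ⟨s, hs, hs'⟩ : ∃ s : ℝ, 0 ≤ s ∧ star z ⬝ᵥ F *ᵥ z = s := by
    have := hF.dotProduct_mulVec_nonneg z
    exact ⟨_, (Complex.le_def.1 this).1, Complex.ext rfl (by simpa using (Complex.le_def.1 this).2.symm)⟩
  set w := F *ᵥ z with hw
  have hw2 : star z ᵥ* F = star w := by
    rw [hw, star_mulVec, hF.1.eq]
  set δ : ℝ := 1 / (s + 1)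
  have hδ : 0 < δ := by positivity
  refine ⟨δ, hδ, ?_⟩
  have hδs : 0 ≤ δ * (1 - δ * s) := by
    apply mul_nonneg hδ.le
    have : δ * s ≤ 1 := by simp only [δ]; rw [one_div_mul_eq_div, div_le_one (by positivity)]; linarith
    linarith
  have h1 := hF.conjTranspose_mul_mul_same (1 - (δ:ℂ) • vecMulVec z (star w))
  have h2 : ((δ * (1 - δ * s) : ℝ) • vecMulVec w (star w)).PosSemidef :=
    (posSemidef_vecMulVec_self_star w).smul hδs
  convert h1.add h2 using 1
  have e1 : (vecMulVec z (star w))ᴴ = vecMulVec w (star z) := by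
    ext i j; simp [vecMulVec_apply, mul_comm]
  rw [conjTranspose_sub, conjTranspose_smul, e1]
  simp only [conjTranspose_one, Complex.star_def, Complex.conj_ofReal, sub_mul, mul_sub, one_mul, mul_one, smul_mul, mul_smul,
    vecMulVec_mul, mul_vecMulVec, ← hw, hw2, vecMulVec_mulVec, Matrix.smul_mul, Matrix.mul_smul]
  have e3 : ((δ:ℂ) • vecMulVec w (star w)) *ᵥ z = (δ * s : ℂ) • w := by
    have : star w ⬝ᵥ z = s := by rw [← hs', ← hw2, dotProduct_mulVec]
    rw [smul_mulVec, vecMulVec_mulVec, this]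
    ext i; simp; ring
  rw [e3]
  ext i j
  simp [vecMulVec_apply]
  ring

def Good {n : ℕ} (F X : Matrix (Fin n) (Fin n) ℂ) : Prop :=
  ∃ δ : ℝ, 0 < δ ∧ ∀ t : ℝ, |t| ≤ δ → (F + t • X).PosSemidef

lemma psd_interp {n : ℕ} {F X : Matrix (Fin n) (Fin n) ℂ} {δ : ℝ} (hδ : 0 < δ)
    (h1 : (F + δ • X).PosSemidef) (h2 : (F - δ • X).PosSemidef) (t : ℝ) (ht : |t| ≤ δ) :
    (F + t • X).PosSemidef := by
  obtain ⟨h3, h4⟩ := abs_le.1 ht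
  have a : 0 ≤ (δ + t) / (2 * δ) := div_nonneg (by linarith) (by linarith)
  have b : 0 ≤ (δ - t) / (2 * δ) := div_nonneg (by linarith) (by linarith)
  convert (h1.smul a).add (h2.smul b) using 1
  have e : (δ + t) / (2 * δ) + (δ - t) / (2 * δ) = 1 := by field_simp; ring
  have e' : ((δ + t) / (2 * δ)) * δ - (δ - t) / (2 * δ) * δ = t := by field_simp; ring
  rw [smul_add, smul_sub, smul_smul, smul_smul]
  have e1 : F + t • X = ((δ + t) / (2 * δ) + (δ - t) / (2 * δ)) • F
      + (((δ + t) / (2 * δ)) * δ - (δ - t) / (2 * δ) * δ) • X := by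
    rw [e, e', one_smul]
  rw [e1, add_smul, sub_smul]
  abel

lemma Good.smul {n : ℕ} {F X : Matrix (Fin n) (Fin n) ℂ} (h : Good F X) (c : ℝ) : Good F (c • X) := by
  obtain ⟨δ, hδ, h⟩ := h
  refine ⟨δ / (|c| + 1), by positivity, fun t ht => ?_⟩
  rw [smul_smul]
  apply h
  rw [abs_mul]
  rw [le_div_iff₀ (by positivity)] at ht
  nlinarith [abs_nonneg t]

lemma Good.add {n : ℕ} {F X Y : Matrix (Fin n) (Fin n) ℂ} (h : Good F X) (h' : Good F Y) :
    Good F (X + Y) := by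
  obtain ⟨δ, hδ, h⟩ := h
  obtain ⟨δ', hδ', h'⟩ := h'
  refine ⟨min δ δ' / 2, by positivity, fun t ht => ?_⟩
  have h1 := h (2 * t) (by rw [abs_mul]; simp; linarith [min_le_left δ δ'])
  have h2 := h' (2 * t) (by rw [abs_mul]; simp; linarith [min_le_right δ δ'])
  have hh : (0:ℝ) ≤ 1/2 := by norm_num
  convert (h1.smul hh).add (h2.smul hh) using 1
  module

lemma good_self {n : ℕ} {F : Matrix (Fin n) (Fin n) ℂ} (hF : F.PosSemidef) : Good F F := by
  refine ⟨1, one_pos, fun t ht => ?_⟩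
  have : 0 ≤ 1 + t := by linarith [(abs_le.1 ht).1]
  convert hF.smul this using 1
  module

lemma good_vec {n : ℕ} {F : Matrix (Fin n) (Fin n) ℂ} (hF : F.PosSemidef) (z : Fin n → ℂ) :
    Good F (vecMulVec (F *ᵥ z) (star (F *ᵥ z))) := by
  obtain ⟨δ, hδ, h⟩ := psd_sub hF z
  refine ⟨δ, hδ, psd_interp hδ ?_ ?_⟩
  · exact hF.add ((posSemidef_vecMulVec_self_star _).smul hδ.le)
  · exact h

lemma indep3 {n : ℕ} {u v : Fin n → ℂ} (h : LinearIndependent ℂ ![u, v]) (α β γ : ℝ)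
    (h0 : α • vecMulVec u (star u) + β • vecMulVec v (star v)
      + γ • vecMulVec (u + v) (star (u + v)) = 0) : α = 0 ∧ β = 0 ∧ γ = 0 := by
  rw [LinearIndependent.pair_iff] at h
  have key : ∀ j, ((α + γ) * star (u j) + γ * star (v j) = 0) ∧
     (γ * star (u j) + (β + γ) * star (v j) = 0) := by
    intro j
    apply h
    ext i
    have := congrFun (congrFun h0 i) j
    simp [vecMulVec_apply] at this
    simp
    linear_combination this
  have k1 := h (α + γ) γ (by
    ext j
    have := congrArg star (key j).1
    simp at this
    simpa using this)
  have k2 := h γ (β + γ) (by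
    ext j
    have := congrArg star (key j).2
    simp at this
    simpa using this)
  have g : γ = 0 := by exact_mod_cast k1.2
  subst g
  simp at k1 k2
  exact ⟨k1, k2, rfl⟩

lemma rank_two {n : ℕ} {F : Matrix (Fin n) (Fin n) ℂ} (h : 1 < F.rank) :
    ∃ x y, LinearIndependent ℂ ![F *ᵥ x, F *ᵥ y] := by
  rw [Matrix.rank] at h
  have : Nontrivial (LinearMap.range F.mulVecLin) := Module.nontrivial_of_finrank_pos (by omega : 0 < Module.finrank ℂ (LinearMap.range F.mulVecLin))
  obtain ⟨x, hx⟩ := exists_ne (0 : LinearMap.range F.mulVecLin)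
  obtain ⟨y, hy⟩ := exists_linearIndependent_pair_of_one_lt_finrank h hx
  obtain ⟨_, x, rfl⟩ := x
  obtain ⟨_, y, rfl⟩ := y
  refine ⟨x, y, ?_⟩
  rw [LinearIndependent.pair_iff] at hy ⊢
  intro s t hst
  exact hy s t (Subtype.ext (by simpa using hst))

lemma matLC {K n : ℕ} : LocallyConvexSpace ℝ (Fin K → Matrix (Fin n) (Fin n) ℂ) :=
  inferInstanceAs (LocallyConvexSpace ℝ (Fin K → Fin n → Fin n → ℂ))

lemma compact_box {K n : ℕ} (R : ℝ) :
    IsCompact {F : Fin K → Matrix (Fin n) (Fin n) ℂ | ∀ k i j, ‖F k i j‖ ≤ R} := by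
  have : IsCompact (Set.pi Set.univ fun _ : Fin K => Set.pi Set.univ fun _ : Fin n =>
      Set.pi Set.univ fun _ : Fin n => Metric.closedBall (0:ℂ) R) :=
    isCompact_univ_pi fun _ => isCompact_univ_pi fun _ => isCompact_univ_pi fun _ =>
      isCompact_closedBall _ _
  have e : {F : Fin K → Matrix (Fin n) (Fin n) ℂ | ∀ k i j, ‖F k i j‖ ≤ R} =
      (Set.pi Set.univ fun _ : Fin K => Set.pi Set.univ fun _ : Fin n =>
      Set.pi Set.univ fun _ : Fin n => Metric.closedBall (0:ℂ) R :
        Set (Fin K → Fin n → Fin n → ℂ)) := by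
    apply Set.ext
    intro F
    refine Iff.trans ?_ Set.mem_univ_pi.symm
    exact forall_congr' fun k => ⟨fun h => Set.mem_univ_pi.2 fun i => Set.mem_univ_pi.2 fun j => by simpa using h i j,
      fun h i j => by simpa using Set.mem_univ_pi.1 (Set.mem_univ_pi.1 h i) j⟩
  rw [e]
  exact this

lemma closed_psd {n : ℕ} : IsClosed {F : Matrix (Fin n) (Fin n) ℂ | F.PosSemidef} := by
  have : {F : Matrix (Fin n) (Fin n) ℂ | F.PosSemidef} = {F | Fᴴ = F} ∩
        ⋂ x : Fin n → ℂ, {F | 0 ≤ star x ⬝ᵥ F *ᵥ x} := by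
    apply Set.ext
    intro F
    simp [posSemidef_iff_dotProduct_mulVec, Matrix.IsHermitian]
  rw [this]
  apply IsClosed.inter
  · exact isClosed_eq (by fun_prop) (by fun_prop)
  · exact isClosed_iInter fun x => isClosed_le (by fun_prop) (by fun_prop)

lemma exists_dir {K n : ℕ} (F : Fin K → Matrix (Fin n) (Fin n) ℂ) (hF : ∀ k, (F k).PosSemidef)
    (hne : ∀ k, F k ≠ 0) (k0 : Fin K) (hr : 1 < (F k0).rank)
    (Φ : (Fin K → Matrix (Fin n) (Fin n) ℂ) →ₗ[ℝ] (Fin K → ℝ) × ℝ) :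
    ∃ X, X ≠ 0 ∧ Φ X = 0 ∧ ∀ k, Good (F k) (X k) := by
  obtain ⟨x, y, hxy⟩ := rank_two hr
  set u := F k0 *ᵥ x with hu
  set v := F k0 *ᵥ y with hv
  let Y : Fin K → Matrix (Fin n) (Fin n) ℂ := fun k => if k = k0 then vecMulVec u (star u) else F k
  let Ψ : ((Fin K → ℝ) × ℝ × ℝ) →ₗ[ℝ] (Fin K → Matrix (Fin n) (Fin n) ℂ) :=
    { toFun := fun p k => p.1 k • Y k + if k = k0 then (p.2.1 • vecMulVec v (star v)
        + p.2.2 • vecMulVec (u + v) (star (u + v))) else 0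
      map_add' := by
        intro p q
        funext k
        by_cases hk : k = k0
        · simp only [hk, if_true, Prod.fst_add, Prod.snd_add, Pi.add_apply]; module
        · simp only [hk, if_false, Prod.fst_add, Pi.add_apply]; module
      map_smul' := by
        intro c q
        funext k
        by_cases hk : k = k0
        · simp only [hk, if_true, Prod.smul_fst, Prod.smul_snd, Pi.smul_apply, smul_eq_mul,
            RingHom.id_apply]; module
        · simp only [hk, if_false, Prod.smul_fst, Pi.smul_apply, smul_eq_mul,
            RingHom.id_apply]; module }
  have hker : LinearMap.ker (Φ ∘ₗ Ψ) ≠ ⊥ := by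
    apply LinearMap.ker_ne_bot_of_finrank_lt
    simp
  obtain ⟨p, hp, hp0⟩ := (Submodule.ne_bot_iff _).1 hker
  refine ⟨Ψ p, ?_, by simpa using hp, ?_⟩
  · intro h0
    apply hp0
    have h3 : p.1 k0 = 0 ∧ p.2.1 = 0 ∧ p.2.2 = 0 := by
      apply indep3 hxy
      have := congrFun h0 k0
      simp only [Ψ, Y, LinearMap.coe_mk, AddHom.coe_mk, if_true] at this
      rw [add_assoc]
      exact this
    refine Prod.ext (funext fun k => ?_) (Prod.ext h3.2.1 h3.2.2)
    by_cases hk : k = k0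
    · rw [hk]; exact h3.1
    · have := congrFun h0 k
      simp only [Ψ, Y, LinearMap.coe_mk, AddHom.coe_mk, if_neg hk, add_zero] at this
      exact (smul_eq_zero.1 this).resolve_right (hne k)
  · intro k
    by_cases hk : k = k0
    · subst hk
      simp only [Ψ, Y, LinearMap.coe_mk, AddHom.coe_mk, if_true]
      refine ((good_vec (hF _) x).smul _).add (((good_vec (hF _) y).smul _).add (Good.smul ?_ _))
      rw [hu, hv, ← mulVec_add]
      exact good_vec (hF _) _
    · simp only [Ψ, Y, LinearMap.coe_mk, AddHom.coe_mk, if_neg hk, add_zero]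
      exact (good_self (hF k)).smul _

lemma good_uniform {K n : ℕ} (F X : Fin K → Matrix (Fin n) (Fin n) ℂ)
    (h : ∀ k, Good (F k) (X k)) :
    ∃ δ : ℝ, 0 < δ ∧ ∀ t : ℝ, |t| ≤ δ → ∀ k, (F k + t • X k).PosSemidef := by
  choose δ hδ h using h
  obtain ⟨e, he, he'⟩ : ∃ e : ℝ, 0 < e ∧ ∀ k, e ≤ δ k := by
    rcases isEmpty_or_nonempty (Fin K) with hK | hK
    · exact ⟨1, one_pos, fun k => hK.elim k⟩
    · obtain ⟨k, hk⟩ := Finite.exists_min δ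
      exact ⟨δ k, hδ k, hk⟩
  exact ⟨e, he, fun t ht k => h k t (ht.trans (he' k))⟩

/-- The real quadratic form evaluation, linear in the matrix. -/
noncomputable def qf {n : ℕ} (v : Fin n → ℂ) : Matrix (Fin n) (Fin n) ℂ →ₗ[ℝ] ℝ where
  toFun M := (star v ⬝ᵥ M *ᵥ v).re
  map_add' A B := by simp [add_mulVec, dotProduct_add]
  map_smul' c A := by simp [smul_mulVec, dotProduct_smul]

/-- The constraint map. -/
noncomputable def cmap {K n : ℕ} (h : Fin K → Fin n → ℂ) (b : Fin n → ℂ) (η : ℝ) :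
    (Fin K → Matrix (Fin n) (Fin n) ℂ) →ₗ[ℝ] (Fin K → ℝ) × ℝ where
  toFun X := (fun k => qf (h k) (X k) - η * ∑ j ∈ Finset.univ.erase k, qf (h k) (X j),
    qf b (∑ k, X k))
  map_add' A B := by
    refine Prod.ext (funext fun k => ?_) ?_
    · simp only [Pi.add_apply, map_add, Finset.sum_add_distrib, Prod.fst_add]; ring
    · simp only [Pi.add_apply, map_add, Finset.sum_add_distrib, Prod.snd_add]
  map_smul' c A := by
    refine Prod.ext (funext fun k => ?_) ?_
    · simp only [Pi.smul_apply, map_smul, Prod.smul_fst, RingHom.id_apply,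
        smul_eq_mul, ← Finset.mul_sum]
      ring
    · simp only [Pi.smul_apply, map_smul, ← Finset.smul_sum, Prod.smul_snd, RingHom.id_apply]

/-- Theorem 3, deterministic form: tightness of the SDR for the single-BS
power-minimization problem: if the SDR is feasible with attained optimum and `ā` does not
lie in the span of the channels, then there is an optimal solution whose matrices all
have rank at most one. -/
theorem sdr_tightness_power_min {K Nt N : ℕ}
    (h : Fin K → Fin Nt → ℂ) (a : Fin Nt → ℂ)
    (σ2 P η ε : ℝ) (hσ2 : 0 < σ2) (hP : 0 < P) (hη : 0 < η) (hε : 0 < ε)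
    (Λ : Matrix (Fin 2) (Fin N) ℝ) (D : Matrix (Fin N) (Fin N) ℝ)
    (hDdiag : D.IsDiag) (hDpd : D.PosDef) (hΛD : (Λ * D * Λᵀ).PosDef)
    -- ā does not lie in the span of { h₁, …, h_K }
    (hspan : star a ∉ Submodule.span ℂ (Set.range h))
    -- the problem is feasible and its optimal value is attained
    (hopt : ∃ (F : Fin K → Matrix (Fin Nt) (Fin Nt) ℂ) (q : ℝ),
        PMinFeas h a Λ D σ2 η ε F q ∧
        ∀ (F' : Fin K → Matrix (Fin Nt) (Fin Nt) ℂ) (q' : ℝ),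
          PMinFeas h a Λ D σ2 η ε F' q' →
            (∑ k, (F k).trace).re / P ≤ (∑ k, (F' k).trace).re / P) :
    ∃ (F : Fin K → Matrix (Fin Nt) (Fin Nt) ℂ) (q : ℝ),
      PMinFeas h a Λ D σ2 η ε F q ∧
      (∀ (F' : Fin K → Matrix (Fin Nt) (Fin Nt) ℂ) (q' : ℝ),
        PMinFeas h a Λ D σ2 η ε F' q' →
          (∑ k, (F k).trace).re / P ≤ (∑ k, (F' k).trace).re / P) ∧
      ∀ k, (F k).rank ≤ 1 := by
  obtain ⟨F0, q, ⟨hF0, hq, hC, hS0, hQ0⟩, hmin0⟩ := hopt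
  have hmin : ∀ F', PMinFeas h a Λ D σ2 η ε F' q →
      (∑ k, (F0 k).trace).re ≤ (∑ k, (F' k).trace).re := by
    intro F' hF'
    exact (div_le_div_iff_of_pos_right hP).1 (hmin0 F' q hF')
  set T := (∑ k, (F0 k).trace).re with hT
  let S : Set (Fin K → Matrix (Fin Nt) (Fin Nt) ℂ) :=
    {F | PMinFeas h a Λ D σ2 η ε F q ∧ (∑ k, (F k).trace).re ≤ T}
  have hSc : IsCompact S := by
    refine (compact_box (2 * T)).of_isClosed_subset ?_ ?_
    · have hcl : IsClosed ((⋂ k, {F : Fin K → Matrix (Fin Nt) (Fin Nt) ℂ | (F k).PosSemidef}) ∩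
          (⋂ k, {F | η * ((∑ j ∈ Finset.univ.erase k,
            (star (h k) ⬝ᵥ (F j).mulVec (h k)).re) + σ2)
              ≤ (star (h k) ⬝ᵥ (F k).mulVec (h k)).re}) ∩
          {F | q ≤ (a ⬝ᵥ (∑ k, F k).mulVec (star a)).re} ∩
          {F | (∑ k, (F k).trace).re ≤ T}) := by
        refine ((IsClosed.inter ?_ ?_).inter ?_).inter ?_
        · exact isClosed_iInter fun k => (closed_psd (n := Nt)).preimage
            (continuous_apply (A := fun _ : Fin K => Matrix (Fin Nt) (Fin Nt) ℂ) k)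
        · refine isClosed_iInter fun k => isClosed_le ?_ ?_
          · fun_prop
          · fun_prop
        · refine isClosed_le ?_ ?_ <;> fun_prop
        · refine isClosed_le ?_ ?_ <;> fun_prop
      convert hcl using 1
      apply Set.ext
      intro F
      simp only [S, PMinFeas, Set.mem_inter_iff, Set.mem_iInter, Set.mem_ofPred_eq]
      tauto
    · rintro F ⟨hF, hFT⟩ k i j
      refine psd_entry_bound (hF.1 k) T (le_trans ?_ hFT) i j
      rw [Complex.re_sum]
      exact Finset.single_le_sum (f := fun k => ((F k).trace).re)
        (fun k _ => (Complex.le_def.1 (hF.1 k).trace_nonneg).1) (Finset.mem_univ k)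
  have hSn : S.Nonempty := ⟨F0, ⟨hF0, hq, hC, hS0, hQ0⟩, le_rfl⟩
  haveI := matLC (K := K) (n := Nt)
  obtain ⟨F, hFe⟩ := hSc.extremePoints_nonempty hSn
  rw [mem_extremePoints] at hFe
  obtain ⟨⟨hF, hFT⟩, hext⟩ := hFe
  refine ⟨F, q, hF, fun F' q' hF' => ?_, fun k0 => ?_⟩
  · refine le_trans ?_ (hmin0 F' q' hF')
    exact (div_le_div_iff_of_pos_right hP).2 hFT
  by_contra hr
  push Not at hr
  have hne : ∀ k, F k ≠ 0 := by
    intro k hk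
    have h1 := hF.2.2.2.1 k
    rw [hk] at h1
    simp only [zero_mulVec, dotProduct_zero, Complex.zero_re] at h1
    have h2 : 0 ≤ ∑ j ∈ Finset.univ.erase k, (star (h k) ⬝ᵥ (F j).mulVec (h k)).re :=
      Finset.sum_nonneg fun j _ => (Complex.le_def.1 ((hF.1 j).dotProduct_mulVec_nonneg _)).1
    have : 0 < η * ((∑ j ∈ Finset.univ.erase k, (star (h k) ⬝ᵥ (F j).mulVec (h k)).re) + σ2) :=
      mul_pos hη (by linarith)
    linarith
  obtain ⟨X, hX0, hΦ, hgood⟩ := exists_dir F hF.1 hne k0 hr (cmap h (star a) η)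
  obtain ⟨δ, hδ, hpsd⟩ := good_uniform F X hgood
  have hfeas_iff : ∀ G : Fin K → Matrix (Fin Nt) (Fin Nt) ℂ, PMinFeas h a Λ D σ2 η ε G q ↔
      (∀ k, (G k).PosSemidef) ∧ (∀ k, η * σ2 ≤ (cmap h (star a) η G).1 k) ∧
        q ≤ (cmap h (star a) η G).2 := by
    intro G
    simp only [PMinFeas, cmap, qf, LinearMap.coe_mk, AddHom.coe_mk, star_star, hq, hC, true_and,
      mul_add, le_sub_iff_add_le, add_comm]
  have hfeas : ∀ t : ℝ, |t| ≤ δ → PMinFeas h a Λ D σ2 η ε (F + t • X) q := by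
    intro t ht
    have h1 := (hfeas_iff F).1 hF
    refine (hfeas_iff _).2 ⟨hpsd t ht, ?_⟩
    rw [map_add, map_smul, hΦ, smul_zero, add_zero]
    exact h1.2
  have htr : ∀ t : ℝ, (∑ k, ((F + t • X) k).trace).re
      = (∑ k, (F k).trace).re + t * (∑ k, (X k).trace).re := by
    intro t
    simp [trace_add, trace_smul, Finset.sum_add_distrib, Finset.mul_sum]
  have e1 := hmin _ (hfeas δ (abs_of_pos hδ).le)
  have e2 := hmin _ (hfeas (-δ) (by rw [abs_neg, abs_of_pos hδ]))
  rw [htr] at e1 e2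
  have p1 : F + δ • X ∈ S := ⟨hfeas δ (abs_of_pos hδ).le, by rw [htr]; linarith⟩
  have p2 : F + (-δ) • X ∈ S :=
    ⟨hfeas (-δ) (by rw [abs_neg, abs_of_pos hδ]), by rw [htr]; linarith⟩
  have := (hext _ p1 _ p2 ⟨1/2, 1/2, by norm_num, by norm_num, by norm_num, by module⟩).1
  rw [add_eq_left, smul_eq_zero] at this
  exact this.elim hδ.ne' hX0
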